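/- Hartogs–Siciak extension in ℓ∞: let f : ℓ∞ × ℓ∞ → ℂ be analytic on B(0,1) × B(0,1), where B(0,1) denotes the open unit ball of ℓ∞. Suppose there exist z1 ∈ ℓ∞ and β1 > 0 with B(z1, β1) ⊆ B(0,1) such that for every z ∈ B(z1, β1) there is a function g_z : ℓ∞ → ℂ analytic on all of ℓ∞ with g_z(w) = f(z, w) for every w ∈ B(0,1). Then there exists F : ℓ∞ × ℓ∞ → ℂ analytic on B(0,1) × ℓ∞ with F(z, w) = f(z, w) for every (z, w) ∈ B(0,1) × B(0,1). -/

import Mathlib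

open scoped ENNReal

/-!
Let `f` be analytic on `U × V ⊆ E × F` (for `ℓ∞`, a product of unit balls), with slices `f (z, ·)`
that are entire for `z` in `D ⊆ U` (the sub-ball). Fix `c ∈ V` and expand `f (z, w)` in homogeneous
polynomials in `w - c`. The terms are analytic on `U × F` and, by Cauchy's estimates, locally
bounded by a geometric sequence. Over `D` they even decay faster than every geometric sequence,
since there the expansion is that of an entire function. Subharmonicity of `log⁺ ‖·‖` makes this
decay propagate: by Hartogs' lemma on complex lines it passes from a set of positive measure to a
whole disc, hence, `U` being connected, from `D × F` to all of `U × F`. Baire's theorem and the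
maximum principle make it locally uniform, so the expansion converges locally uniformly on `U × F`,
and its sum is `f` on `U × V` by the identity theorem.
-/

open Metric Set Filter Topology MeasureTheory
open scoped Nat

section TaylorSeries

lemma iteratedFDeriv_comp_add_continuousLinearMap {𝕜 E F G : Type*} [NontriviallyNormedField 𝕜]
    [NormedAddCommGroup E] [NormedSpace 𝕜 E] [NormedAddCommGroup F] [NormedSpace 𝕜 F]
    [NormedAddCommGroup G] [NormedSpace 𝕜 G] {h : E → G} {x : E} {n : ℕ}
    (hh : ContDiffAt 𝕜 n h x) (L : F →L[𝕜] E) :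
    iteratedFDeriv 𝕜 n (fun v => h (x + L v)) 0 =
      (iteratedFDeriv 𝕜 n h x).compContinuousLinearMap fun _ => L := by
  have hshift : ContDiffAt 𝕜 n (fun v => h (x + v)) 0 :=
    ContDiffAt.comp 0 (by rwa [add_zero]) (by fun_prop)
  obtain ⟨V, hV, hVo, hV0⟩ :=
    _root_.eventually_nhds_iff.1 (hshift.eventually (by simp))
  have hL : IsOpen (L ⁻¹' V) := hVo.preimage L.continuous
  have hL0 : L 0 ∈ V := by rwa [map_zero]
  have key := L.iteratedFDerivWithin_comp_right (fun v hv => (hV v hv).contDiffWithinAt)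
    hVo.uniqueDiffOn hL.uniqueDiffOn hL0 le_rfl
  rwa [iteratedFDerivWithin_of_isOpen _ hL hL0, iteratedFDerivWithin_of_isOpen _ hVo hL0,
    map_zero, iteratedFDeriv_comp_add_left, add_zero] at key

variable {E F G : Type*} [NormedAddCommGroup E] [NormedSpace ℂ E] [NormedAddCommGroup F]
  [NormedSpace ℂ F] [NormedAddCommGroup G] [NormedSpace ℂ G]

/-- The Taylor series of `h` at `x`, normalized by factorials so that an analytic function is the
sum of its Taylor series (Mathlib's `ftaylorSeries` consists of the bare iterated derivatives). -/
noncomputable def taylorPowerSeries (h : E → G) (x : E) : FormalMultilinearSeries ℂ E G :=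
  fun n => (n ! : ℂ)⁻¹ • iteratedFDeriv ℂ n h x

lemma taylorPowerSeries_comp_add_apply [CompleteSpace G] {h : E → G} {x : E}
    (hh : AnalyticAt ℂ h x) (L : F →L[ℂ] E) (n : ℕ) (v : F) :
    taylorPowerSeries (fun v => h (x + L v)) 0 n (fun _ => v) =
      taylorPowerSeries h x n fun _ => L v := by
  simp only [taylorPowerSeries, iteratedFDeriv_comp_add_continuousLinearMap hh.contDiffAt L]
  rfl

lemma hasSum_taylorPowerSeries [CompleteSpace G] {h : E → G} {x y : E} {r : ℝ}
    (hh : AnalyticOnNhd ℂ h (ball x r)) (hy : ‖y‖ < r) :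
    HasSum (fun n => taylorPowerSeries h x n fun _ => y) (h (x + y)) := by
  obtain ⟨ρ, hρ, hρr⟩ : ∃ ρ > 1, ρ * ‖y‖ < r :=
    (((continuous_mul_const ‖y‖).tendsto' 1 ‖y‖ (one_mul _)).eventually_lt_const hy
      |>.filter_mono nhdsWithin_le_nhds |>.and (self_mem_nhdsWithin (s := Ioi 1))).exists.imp
        fun _ => And.symm
  have hline : MapsTo (fun t : ℂ => x + t • y) (ball 0 ρ) (ball x r) := fun t ht => by
    rw [mem_ball_zero_iff] at ht
    rw [mem_ball_iff_norm, add_sub_cancel_left, norm_smul]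
    exact lt_of_le_of_lt (by gcongr) hρr
  have hdiff : DifferentiableOn ℂ (fun t : ℂ => h (x + t • y)) (ball 0 ρ) :=
    hh.differentiableOn.comp (by fun_prop) hline
  have hx : AnalyticAt ℂ h x := hh x (mem_ball_self ((norm_nonneg y).trans_lt hy))
  convert Complex.hasSum_taylorSeries_on_ball (z := 1) hdiff (by simpa using hρ) using 1
  · ext n
    simpa [taylorPowerSeries, iteratedDeriv] using
      (taylorPowerSeries_comp_add_apply hx (ContinuousLinearMap.toSpanSingleton ℂ y) n 1).symm
  · simp

lemma norm_iteratedFDeriv_le_of_forall_mem_ball {h : E → G} {s M : ℝ} (hs : 0 < s) (n : ℕ) {x : E}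
    (hh : AnalyticOnNhd ℂ h (ball x ((n + 1) * s)))
    (hM : ∀ y ∈ ball x ((n + 1) * s), ‖h y‖ ≤ M) :
    ‖iteratedFDeriv ℂ n h x‖ ≤ M * (2 / s) ^ n := by
  induction n generalizing x with
  | zero => simpa using hM x (mem_ball_self (by simpa using hs))
  | succ n ih =>
    have hsub : ∀ y ∈ ball x s, ball y ((n + 1) * s) ⊆ ball x (((n + 1 : ℕ) + 1) * s) :=
      fun y hy => ball_subset_ball' (by push_cast; linarith [mem_ball.1 hy])
    have hbound : ∀ y ∈ ball x s, ‖iteratedFDeriv ℂ n h y‖ ≤ M * (2 / s) ^ n := fun y hy =>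
      ih (hh.mono (hsub y hy)) fun z hz => hM z (hsub y hy hz)
    have hdiff : DifferentiableOn ℂ (iteratedFDeriv ℂ n h) (ball x s) :=
      ((hh.iteratedFDeriv_of_isOpen isOpen_ball n).mono
        (ball_subset_ball (by push_cast; nlinarith [n.cast_nonneg (α := ℝ)]))).differentiableOn
    have hmaps : MapsTo (iteratedFDeriv ℂ n h) (ball x s)
        (closedBall (iteratedFDeriv ℂ n h x) (2 * (M * (2 / s) ^ n))) := fun y hy => by
      rw [mem_closedBall_iff_norm, two_mul]
      exact norm_sub_le_of_le (hbound y hy) (hbound x (mem_ball_self hs))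
    rw [← norm_fderiv_iteratedFDeriv]
    refine (Complex.norm_fderiv_le_div_of_mapsTo_ball hdiff hmaps hs).trans_eq ?_
    ring

-- One first order Cauchy estimate per derivative, on balls of radius `r / (n + 1)`; the resulting
-- factor `(n + 1) ^ n` is absorbed by `n !`.
lemma norm_taylorPowerSeries_le {h : E → G} {x : E} {r M : ℝ} (hr : 0 < r)
    (hh : AnalyticOnNhd ℂ h (ball x r)) (hM : ∀ y ∈ ball x r, ‖h y‖ ≤ M) (n : ℕ) :
    ‖taylorPowerSeries h x n‖ ≤ Real.exp 1 * M * (2 * Real.exp 1 / r) ^ n := by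
  have hn : (0 : ℝ) < n + 1 := by positivity
  have hrn : (n + 1) * (r / (n + 1)) = r := mul_div_cancel₀ r hn.ne'
  have hM0 : 0 ≤ M := (norm_nonneg _).trans (hM x (mem_ball_self hr))
  have hCauchy : ‖iteratedFDeriv ℂ n h x‖ ≤ M * (2 / (r / (n + 1))) ^ n :=
    norm_iteratedFDeriv_le_of_forall_mem_ball (by positivity) n (by rwa [hrn]) (by rwa [hrn])
  calc ‖taylorPowerSeries h x n‖ = (n ! : ℝ)⁻¹ * ‖iteratedFDeriv ℂ n h x‖ := by
        simp [taylorPowerSeries, norm_smul]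
    _ ≤ (n ! : ℝ)⁻¹ * (M * (2 / (r / (n + 1))) ^ n) := by gcongr
    _ = M * (2 / r) ^ n * ((n + 1 : ℝ) ^ n / n !) := by
        rw [show 2 / (r / (n + 1 : ℝ)) = 2 / r * (n + 1) by field_simp, mul_pow]; ring
    _ ≤ M * (2 / r) ^ n * Real.exp (n + 1) := by
        gcongr; exact Real.pow_div_factorial_le_exp _ hn.le n
    _ = Real.exp 1 * M * (2 * Real.exp 1 / r) ^ n := by
        rw [Real.exp_add, ← Real.exp_one_pow, mul_div_right_comm, mul_pow]; ring

lemma norm_taylorPowerSeries_mul_pow_le {h : E → G} {x : E} {r M : ℝ} (hr : 0 < r)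
    (hh : AnalyticOnNhd ℂ h (ball x r)) (hM : ∀ y ∈ ball x r, ‖h y‖ ≤ M) (n : ℕ) :
    ‖taylorPowerSeries h x n‖ * (r / (4 * Real.exp 1)) ^ n ≤ Real.exp 1 * M * (1 / 2) ^ n := by
  calc ‖taylorPowerSeries h x n‖ * (r / (4 * Real.exp 1)) ^ n
      ≤ Real.exp 1 * M * (2 * Real.exp 1 / r) ^ n * (r / (4 * Real.exp 1)) ^ n := by
        gcongr; exact norm_taylorPowerSeries_le hr hh hM n
    _ = Real.exp 1 * M * (1 / 2) ^ n := by
        rw [mul_assoc, ← mul_pow]; congr 2; field_simp; norm_num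

lemma summable_norm_taylorPowerSeries {ι : Type*} {u : ι → ℝ} (hu : Summable u) {h : ι → E → G}
    {x : E} {r : ℝ} (hr : 0 < r) (hh : ∀ i, AnalyticOnNhd ℂ (h i) (ball x r))
    (hhu : ∀ i, ∀ y ∈ ball x r, ‖h i y‖ ≤ u i) (n : ℕ) :
    Summable fun i => ‖taylorPowerSeries (h i) x n‖ :=
  ((hu.mul_left (Real.exp 1)).mul_right _).of_nonneg_of_le (fun _ => norm_nonneg _)
    fun i => norm_taylorPowerSeries_le hr (hh i) (hhu i) n

lemma ofReal_le_radius_tsum_taylorPowerSeries {ι : Type*} {u : ι → ℝ} (hu : Summable u)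
    {h : ι → E → G} {x : E} {r : ℝ} (hr : 0 < r) (hh : ∀ i, AnalyticOnNhd ℂ (h i) (ball x r))
    (hhu : ∀ i, ∀ y ∈ ball x r, ‖h i y‖ ≤ u i) :
    ENNReal.ofReal (r / (4 * Real.exp 1)) ≤
      FormalMultilinearSeries.radius fun n => ∑' i, taylorPowerSeries (h i) x n := by
  refine FormalMultilinearSeries.le_radius_of_bound (r := (r / (4 * Real.exp 1)).toNNReal) _
    (∑' i, Real.exp 1 * u i) fun n => ?_
  have hsum := summable_norm_taylorPowerSeries hu hr hh hhu n
  rw [Real.coe_toNNReal _ (by positivity)]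
  calc ‖∑' i, taylorPowerSeries (h i) x n‖ * (r / (4 * Real.exp 1)) ^ n
      ≤ (∑' i, ‖taylorPowerSeries (h i) x n‖) * (r / (4 * Real.exp 1)) ^ n := by
        gcongr; exact norm_tsum_le_tsum_norm hsum
    _ ≤ ∑' i, Real.exp 1 * u i := by
        rw [← tsum_mul_right]
        refine (hsum.mul_right _).tsum_le_tsum (fun i => ?_) (hu.mul_left _)
        have hu0 : 0 ≤ u i := (norm_nonneg _).trans (hhu i x (mem_ball_self hr))
        exact (norm_taylorPowerSeries_mul_pow_le hr (hh i) (hhu i) n).trans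
          (mul_le_of_le_one_right (by positivity) (pow_le_one₀ (by norm_num) (by norm_num)))

lemma hasSum_tsum_taylorPowerSeries [CompleteSpace G] {ι : Type*} {u : ι → ℝ} (hu : Summable u)
    {h : ι → E → G} {x y : E} {r : ℝ} (hr : 0 < r) (hh : ∀ i, AnalyticOnNhd ℂ (h i) (ball x r))
    (hhu : ∀ i, ∀ y ∈ ball x r, ‖h i y‖ ≤ u i) (hy : ‖y‖ < r / (4 * Real.exp 1)) :
    HasSum (fun n => (∑' i, taylorPowerSeries (h i) x n) fun _ => y) (∑' i, h i (x + y)) := by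
  have hyr : ‖y‖ < r := hy.trans (div_lt_self hr (by linarith [Real.add_one_le_exp (1 : ℝ)]))
  have hu0 (i : ι) : 0 ≤ Real.exp 1 * u i :=
    mul_nonneg (Real.exp_pos 1).le ((norm_nonneg _).trans (hhu i x (mem_ball_self hr)))
  have hdouble : Summable fun z : ι × ℕ => taylorPowerSeries (h z.1) x z.2 fun _ => y := by
    refine Summable.of_norm_bounded ((hu.mul_left (Real.exp 1)).mul_of_nonneg
      summable_geometric_two hu0 fun n => by positivity) fun z => ?_
    calc ‖taylorPowerSeries (h z.1) x z.2 fun _ => y‖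
        ≤ ‖taylorPowerSeries (h z.1) x z.2‖ * ‖y‖ ^ z.2 := by
          simpa using (taylorPowerSeries (h z.1) x z.2).le_opNorm fun _ => y
      _ ≤ ‖taylorPowerSeries (h z.1) x z.2‖ * (r / (4 * Real.exp 1)) ^ z.2 := by gcongr
      _ ≤ Real.exp 1 * u z.1 * (1 / 2) ^ z.2 :=
          norm_taylorPowerSeries_mul_pow_le hr (hh z.1) (hhu z.1) z.2
  have hrow (i : ι) := hasSum_taylorPowerSeries (hh i) hyr
  have hcol (n : ℕ) := ContinuousMultilinearMap.hasSum_eval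
    (summable_norm_taylorPowerSeries hu hr hh hhu n).of_norm.hasSum fun _ => y
  rw [(hdouble.hasSum.prod_fiberwise hrow).tsum_eq]
  exact ((Equiv.prodComm ℕ ι).hasSum_iff.2 hdouble.hasSum).prod_fiberwise hcol

lemma analyticOnNhd_tsum_of_summable_norm [CompleteSpace G] {ι : Type*} {u : ι → ℝ}
    (hu : Summable u) {h : ι → E → G} {U : Set E} (hU : IsOpen U)
    (hh : ∀ i, AnalyticOnNhd ℂ (h i) U) (hhu : ∀ i, ∀ y ∈ U, ‖h i y‖ ≤ u i) :
    AnalyticOnNhd ℂ (fun y => ∑' i, h i y) U := fun x hx => by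
  obtain ⟨r, hr, hrU⟩ := Metric.isOpen_iff.1 hU x hx
  have hhr (i : ι) := (hh i).mono hrU
  have hhur (i : ι) (y : E) (hy : y ∈ ball x r) := hhu i y (hrU hy)
  refine HasFPowerSeriesOnBall.analyticAt
    ⟨ofReal_le_radius_tsum_taylorPowerSeries hu hr hhr hhur,
      ENNReal.ofReal_pos.2 (by positivity), fun {y} hy => ?_⟩
  exact hasSum_tsum_taylorPowerSeries hu hr hhr hhur (by simpa [Metric.eball_ofReal] using hy)

end TaylorSeries

section CircleAverages

lemma log_norm_le_circleAverage_log_norm {h : ℂ → ℂ} {c : ℂ} {r : ℝ} (hr : 0 < r)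
    (hh : AnalyticOnNhd ℂ h (closedBall c r)) (hc : h c ≠ 0) :
    Real.log ‖h c‖ ≤ Real.circleAverage (fun z => Real.log ‖h z‖) c r := by
  rw [← abs_of_pos hr] at hh
  rw [AnalyticOnNhd.circleAverage_log_norm hr.ne' hh hc, le_add_iff_nonneg_left]
  refine finsum_nonneg fun u => ?_
  by_cases hu : u ∈ closedBall c |r|
  · have hdiv := MeromorphicOn.AnalyticOnNhd.divisor_nonneg hh u
    refine mul_nonneg (by exact_mod_cast hdiv) ?_
    rcases eq_or_ne u c with rfl | huc
    · simp
    · refine Real.log_nonneg ?_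
      rw [mem_closedBall', dist_eq_norm, abs_of_pos hr] at hu
      rwa [← div_eq_mul_inv, one_le_div (norm_pos_iff.2 (sub_ne_zero.2 huc.symm))]
  · simp [Function.locallyFinsuppWithin.apply_eq_zero_of_notMem _ hu]

lemma posLog_norm_le_circleAverage_posLog_norm {h : ℂ → ℂ} {c : ℂ} {r : ℝ} (hr : 0 < r)
    (hh : AnalyticOnNhd ℂ h (closedBall c r)) :
    Real.posLog ‖h c‖ ≤ Real.circleAverage (fun z => Real.posLog ‖h z‖) c r := by
  have hnonneg : 0 ≤ Real.circleAverage (fun z => Real.posLog ‖h z‖) c r :=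
    Real.circleAverage_nonneg_of_nonneg fun _ _ => Real.posLog_nonneg
  have hh' : AnalyticOnNhd ℂ h (sphere c r) := hh.mono sphere_subset_closedBall
  refine max_le hnonneg ?_
  by_cases hc : h c = 0
  · simpa [hc] using hnonneg
  refine (log_norm_le_circleAverage_log_norm hr hh hc).trans
    (Real.circleAverage_mono ?_ ?_ fun _ _ => le_max_right _ _)
  · rw [← abs_of_pos hr] at hh'
    exact hh'.meromorphicOn.circleIntegrable_log_norm
  · exact (Real.continuous_posLog.comp_continuousOn hh'.continuousOn.norm).circleIntegrable hr.le

lemma lintegral_eq_lintegral_circleMap {g : ℂ → ℝ≥0∞} (hg : Measurable g) (c : ℂ) :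
    ∫⁻ z, g z = ∫⁻ r in Ioi (0 : ℝ), ENNReal.ofReal r *
      ∫⁻ θ in Ioo (-Real.pi) Real.pi, g (circleMap c r θ) := by
  have hpolar (p : ℝ × ℝ) : c + Complex.polarCoord.symm p = circleMap c p.1 p.2 := by
    simp [Complex.polarCoord_symm_apply, circleMap, Complex.exp_mul_I]
  have hmeas : Measurable fun p : ℝ × ℝ => circleMap c p.1 p.2 := by
    unfold circleMap; fun_prop
  rw [← lintegral_add_left_eq_self g c, ← Complex.lintegral_comp_polarCoord_symm]
  simp only [hpolar, smul_eq_mul, polarCoord_target]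
  rw [Measure.volume_eq_prod, ← Measure.prod_restrict, lintegral_prod _ (by fun_prop)]
  simp only [lintegral_const_mul' _ _ ENNReal.ofReal_ne_top]

lemma lintegral_ofReal_circleMap {v : ℂ → ℝ} {c : ℂ} {r : ℝ} (hr : 0 ≤ r)
    (hv : ContinuousOn v (sphere c r)) (hv0 : ∀ z ∈ sphere c r, 0 ≤ v z) :
    ∫⁻ θ in Ioo (-Real.pi) Real.pi, ENNReal.ofReal (v (circleMap c r θ)) =
      ENNReal.ofReal (2 * Real.pi * Real.circleAverage v c r) := by
  have hcont : Continuous fun θ => v (circleMap c r θ) :=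
    hv.comp_continuous (continuous_circleMap c r) (circleMap_mem_sphere c hr)
  rw [restrict_Ioo_eq_restrict_Ioc, ← ofReal_integral_eq_lintegral_ofReal hcont.integrableOn_Ioc
    (.of_forall fun θ => hv0 _ (circleMap_mem_sphere c hr θ)),
    ← intervalIntegral.integral_of_le (by linarith [Real.pi_pos]),
    Real.circleAverage_eq_integral_add (-Real.pi), smul_eq_mul,
    mul_inv_cancel_left₀ (by positivity),
    intervalIntegral.integral_comp_add_right (fun θ => v (circleMap c r θ))]
  congr 2 <;> ring

lemma setLIntegral_ball_le_of_circleAverage_le {v : ℂ → ℝ} {c : ℂ} {s a : ℝ}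
    (hv : ContinuousOn v (ball c s)) (hv0 : ∀ z ∈ ball c s, 0 ≤ v z)
    (hva : ∀ r ∈ Ioo 0 s, Real.circleAverage v c r ≤ a) :
    ∫⁻ z in ball c s, ENNReal.ofReal (v z) ≤ volume (ball c s) * ENNReal.ofReal a := by
  classical
  have hmeas : Measurable ((ball c s).indicator fun z => ENNReal.ofReal (v z)) := by
    rw [← piecewise_eq_indicator]
    exact (ENNReal.continuous_ofReal.comp_continuousOn hv).measurable_piecewise
      continuousOn_const measurableSet_ball
  rw [mul_comm, ← setLIntegral_const, ← lintegral_indicator measurableSet_ball,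
    ← lintegral_indicator measurableSet_ball, lintegral_eq_lintegral_circleMap hmeas c,
    lintegral_eq_lintegral_circleMap (measurable_const.indicator measurableSet_ball) c]
  refine setLIntegral_mono' measurableSet_Ioi fun r (hr : 0 < r) => ?_
  gcongr ENNReal.ofReal r * ?_
  have hmem (θ : ℝ) : circleMap c r θ ∈ ball c s ↔ r < s := by
    rw [mem_ball, mem_sphere.1 (circleMap_mem_sphere c hr.le θ)]
  by_cases hrs : r < s
  · have hsub : sphere c r ⊆ ball c s := sphere_subset_ball hrs
    simp only [indicator_of_mem ((hmem _).2 hrs)]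
    rw [lintegral_ofReal_circleMap hr.le (hv.mono hsub) fun z hz => hv0 z (hsub hz),
      setLIntegral_const, Real.volume_Ioo, ← ENNReal.ofReal_mul' (by linarith [Real.pi_pos])]
    refine ENNReal.ofReal_le_ofReal ?_
    nlinarith [hva r ⟨hr, hrs⟩, Real.pi_pos]
  · simp only [indicator_of_notMem (mt (hmem _).1 hrs), le_refl]

end CircleAverages

section HartogsLemma

lemma mul_measureReal_le_of_norm_le_exp {h : ℂ → ℂ} {c : ℂ} {s L : ℝ} (hs : 0 < s)
    (hh : AnalyticOnNhd ℂ h (ball c s)) (hL : 0 ≤ L) (hhL : ∀ z ∈ ball c s, ‖h z‖ ≤ Real.exp L)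
    {T : Set ℂ} (hT : T ⊆ ball c s) (hhT : ∀ z ∈ T, ‖h z‖ ≤ 1) :
    L * volume.real T ≤ volume.real (ball c s) * (L - Real.posLog ‖h c‖) := by
  set v : ℂ → ℝ := fun z => L - Real.posLog ‖h z‖
  have hpos {z : ℂ} (hz : z ∈ ball c s) : 0 ≤ v z :=
    sub_nonneg.2 <| (Real.posLog_le_posLog (norm_nonneg _) (hhL z hz)).trans_eq
      (by rw [Real.posLog, Real.log_exp, max_eq_right hL])
  have hposLog : ContinuousOn (fun z => Real.posLog ‖h z‖) (ball c s) :=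
    Real.continuous_posLog.comp_continuousOn hh.continuousOn.norm
  have hv : ContinuousOn v (ball c s) := continuousOn_const.sub hposLog
  have haverage : ∀ r ∈ Ioo 0 s, Real.circleAverage v c r ≤ v c := fun r hr => by
    have hsub : sphere c r ⊆ ball c s := sphere_subset_ball hr.2
    rw [Real.circleAverage_fun_sub (continuousOn_const.circleIntegrable hr.1.le)
      ((hposLog.mono hsub).circleIntegrable hr.1.le), Real.circleAverage_const]
    exact sub_le_sub_left (posLog_norm_le_circleAverage_posLog_norm hr.1
      (hh.mono (closedBall_subset_ball hr.2))) L
  have hmeasure : ENNReal.ofReal L * volume T ≤ volume (ball c s) * ENNReal.ofReal (v c) :=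
    calc ENNReal.ofReal L * volume T = ENNReal.ofReal L * volume.restrict (ball c s) T := by
          rw [Measure.restrict_eq_self _ hT]
      _ ≤ ENNReal.ofReal L *
          volume.restrict (ball c s) {z | ENNReal.ofReal L ≤ ENNReal.ofReal (v z)} := by
          gcongr
          intro z hz
          have : Real.posLog ‖h z‖ = 0 :=
            (Real.posLog_eq_zero_iff _).2 ((abs_norm _).trans_le (hhT z hz))
          simp [v, this]
      _ ≤ ∫⁻ z in ball c s, ENNReal.ofReal (v z) :=
          mul_meas_ge_le_lintegral₀ (hv.aemeasurable measurableSet_ball).ennreal_ofReal _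
      _ ≤ volume (ball c s) * ENNReal.ofReal (v c) :=
          setLIntegral_ball_le_of_circleAverage_le hv (fun _ => hpos) haverage
  simpa [measureReal_def, hL, hpos (mem_ball_self hs)] using
    ENNReal.toReal_mono (by finiteness) hmeasure

variable {G : Type*} [NormedAddCommGroup G]

/-- Decay faster than every geometric sequence; for the coefficients of a power series this says
that the radius of convergence is infinite. -/
def HasSuperexponentialDecay (a : ℕ → G) : Prop :=
  ∀ R > 0, ∃ K : ℝ, ∀ n, ‖a n‖ * R ^ n ≤ K

lemma exists_lt_measure_forall_norm_mul_pow_le {α : Type*} [MeasurableSpace α] {μ : Measure α}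
    {h : ℕ → α → G} {S : Set α} (hS : ∀ z ∈ S, HasSuperexponentialDecay fun n => h n z)
    {η : ℝ≥0∞} (hη : η < μ S) {R : ℝ} (hR : 0 < R) :
    ∃ (K : ℝ) (T : Set α), T ⊆ S ∧ η < μ T ∧ ∀ z ∈ T, ∀ n, ‖h n z‖ * R ^ n ≤ K := by
  set T : ℕ → Set α := fun k => {z ∈ S | ∀ n, ‖h n z‖ * R ^ n ≤ k}
  have hmono : Monotone T := fun k l hkl z hz =>
    ⟨hz.1, fun n => (hz.2 n).trans (by exact_mod_cast hkl)⟩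
  have hunion : S ⊆ ⋃ k, T k := fun z hz =>
    have ⟨K, hK⟩ := hS z hz R hR
    have ⟨k, hk⟩ := exists_nat_ge K
    mem_iUnion.2 ⟨k, hz, fun n => (hK n).trans hk⟩
  obtain ⟨k, hk⟩ := ((tendsto_measure_iUnion_atTop hmono).eventually_const_lt
    (hη.trans_le (measure_mono hunion))).exists
  exact ⟨k, T k, fun _ hz => hz.1, hk, fun _ hz => hz.2⟩

variable [NormedSpace ℂ G]

lemma norm_le_exp_sub_mul_measureReal_div {h : ℂ → G} {c : ℂ} {s L B : ℝ} (hs : 0 < s)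
    (hh : AnalyticOnNhd ℂ h (ball c s)) (hL : 0 ≤ L) (hhB : ∀ z ∈ ball c s, ‖h z‖ ≤ Real.exp B)
    {T : Set ℂ} (hT : T ⊆ ball c s) (hhT : ∀ z ∈ T, ‖h z‖ ≤ Real.exp (B - L)) :
    ‖h c‖ ≤ Real.exp (B - L * (volume.real T / volume.real (ball c s))) := by
  obtain ⟨ψ, hψ, hψc⟩ := exists_dual_vector'' ℂ (h c)
  set g : ℂ → ℂ := fun z => (Real.exp (L - B) : ℂ) * ψ (h z) with hg
  have hgh {z : ℂ} {a : ℝ} (ha : ‖h z‖ ≤ Real.exp a) : ‖g z‖ ≤ Real.exp (L - B + a) := by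
    rw [hg, norm_mul, Complex.norm_of_nonneg (Real.exp_pos _).le, Real.exp_add]
    gcongr
    exact (ψ.le_of_opNorm_le_of_le hψ ha).trans_eq (one_mul _)
  have hgc : ‖g c‖ = Real.exp (L - B) * ‖h c‖ := by
    rw [hg, norm_mul, Complex.norm_of_nonneg (Real.exp_pos _).le, hψc, norm_algebraMap', norm_norm]
  have hball : 0 < volume.real (ball c s) :=
    ENNReal.toReal_pos (measure_ball_pos volume c hs).ne' measure_ball_lt_top.ne
  have hposLog := mul_measureReal_le_of_norm_le_exp hs
    (analyticOnNhd_const.mul (ψ.comp_analyticOnNhd hh)) hL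
    (fun z hz => (hgh (hhB z hz)).trans_eq (by rw [sub_add_cancel])) hT
    (fun z hz => (hgh (hhT z hz)).trans_eq (by
      rw [sub_add_sub_cancel, sub_self, Real.exp_zero]))
  have hlog : Real.log ‖g c‖ ≤ L - L * (volume.real T / volume.real (ball c s)) := by
    have : Real.log ‖g c‖ ≤ Real.posLog ‖g c‖ := le_max_right _ _
    rw [← mul_div_assoc, le_sub_comm, div_le_iff₀' hball]
    exact hposLog.trans (mul_le_mul_of_nonneg_left (sub_le_sub_left this L) hball.le)
  calc ‖h c‖ = Real.exp (B - L) * ‖g c‖ := by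
        rw [hgc, ← mul_assoc, ← Real.exp_add]; simp
    _ ≤ Real.exp (B - L) * Real.exp (L - L * (volume.real T / volume.real (ball c s))) := by
        gcongr; exact (Real.le_exp_log _).trans (Real.exp_le_exp.2 hlog)
    _ = Real.exp (B - L * (volume.real T / volume.real (ball c s))) := by
        rw [← Real.exp_add]; ring_nf

lemma norm_mul_pow_le_exp_of_norm_le_exp {h : ℂ → G} {c : ℂ} {s b C ℓ R : ℝ} {n : ℕ} (hs : 0 < s)
    (hh : AnalyticOnNhd ℂ h (ball c s)) (hℓ : 0 ≤ ℓ)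
    (hhb : ∀ z ∈ ball c s, ‖h z‖ ≤ Real.exp (b + n * C)) {T : Set ℂ} (hT : T ⊆ ball c s)
    (hhT : ∀ z ∈ T, ‖h z‖ * Real.exp (ℓ - C) ^ n ≤ Real.exp b) (hR : 0 < R)
    (hRℓ : C + Real.log R ≤ ℓ * (volume.real T / volume.real (ball c s))) :
    ‖h c‖ * R ^ n ≤ Real.exp b := by
  have hc : ‖h c‖ ≤
      Real.exp (b + n * C - n * ℓ * (volume.real T / volume.real (ball c s))) := by
    refine norm_le_exp_sub_mul_measureReal_div hs hh (by positivity) hhb hT fun z hz => ?_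
    rw [show b + n * C - n * ℓ = b - n * (ℓ - C) by ring, Real.exp_sub, Real.exp_nat_mul,
      le_div_iff₀ (by positivity)]
    exact hhT z hz
  calc ‖h c‖ * R ^ n ≤ Real.exp (b + n * C - n * ℓ *
        (volume.real T / volume.real (ball c s))) * Real.exp (n * Real.log R) := by
        rw [Real.exp_nat_mul, Real.exp_log hR]; gcongr
    _ = Real.exp (b + n * (C + Real.log R - ℓ * (volume.real T / volume.real (ball c s)))) := by
        rw [← Real.exp_add]; ring_nf
    _ ≤ Real.exp b := by
        rw [Real.exp_le_exp, add_le_iff_nonpos_right]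
        exact mul_nonpos_of_nonneg_of_nonpos n.cast_nonneg (sub_nonpos.2 hRℓ)

lemma exists_forall_norm_mul_pow_le_of_measure_ne_zero {h : ℕ → ℂ → G} {A Ω S : Set ℂ}
    {s M C : ℝ} (hs : 0 < s) (hh : ∀ n, AnalyticOnNhd ℂ (h n) Ω) (hC : 0 ≤ C)
    (hhM : ∀ n, ∀ z ∈ Ω, ‖h n z‖ ≤ M * C ^ n) (hAΩ : ∀ z ∈ A, ball z s ⊆ Ω)
    (hSA : ∀ z ∈ A, S ⊆ ball z s) (hS : volume S ≠ 0)
    (hSdecay : ∀ z ∈ S, HasSuperexponentialDecay fun n => h n z) {R : ℝ} (hR : 0 < R) :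
    ∃ K, ∀ z ∈ A, ∀ n, ‖h n z‖ * R ^ n ≤ K := by
  obtain ⟨η, hη0, hηS⟩ := ENNReal.lt_iff_exists_nnreal_btwn.1 (pos_iff_ne_zero.2 hS)
  replace hη0 : 0 < (η : ℝ) := by exact_mod_cast hη0
  set V := volume.real (ball (0 : ℂ) s)
  have hV : 0 < V := ENNReal.toReal_pos (measure_ball_pos volume 0 hs).ne' measure_ball_lt_top.ne
  -- the decay rate on `T` from which the two-constants estimate, applied to a fraction `η / V` of
  -- the disc, produces the decay rate `log R` at the center in spite of the growth rate `C`
  set ℓ := |C + Real.log R| * (V / η) with hℓ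
  obtain ⟨K, T, hTS, hηT, hTK⟩ :=
    exists_lt_measure_forall_norm_mul_pow_le hSdecay hηS (Real.exp_pos (ℓ - C))
  set b := max M K
  have hexp (x : ℝ) : x ≤ Real.exp x := by linarith [Real.add_one_le_exp x]
  refine ⟨Real.exp b, fun z hz n => ?_⟩
  have hTz : T ⊆ ball z s := hTS.trans (hSA z hz)
  have hfraction : η / V ≤ volume.real T / volume.real (ball z s) := by
    have hTfin : volume T ≠ ∞ := measure_ne_top_of_subset hTz measure_ball_lt_top.ne
    rw [show volume.real (ball z s) = V by simp [V, measureReal_def]]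
    gcongr
    exact ENNReal.toReal_mono hTfin hηT.le
  have hrate : C + Real.log R ≤ ℓ * (volume.real T / volume.real (ball z s)) :=
    calc C + Real.log R ≤ ℓ * (η / V) := by
          rw [hℓ, mul_assoc, div_mul_div_cancel₀ hη0.ne', div_self hV.ne', mul_one]
          exact le_abs_self _
      _ ≤ _ := by gcongr
  refine norm_mul_pow_le_exp_of_norm_le_exp hs ((hh n).mono (hAΩ z hz)) (by positivity)
    (fun w hw => (hhM n w (hAΩ z hz hw)).trans ?_) hTz
    (fun w hw => (hTK w hw n).trans ((le_max_right _ _).trans (hexp b))) hR hrate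
  rw [Real.exp_add, Real.exp_nat_mul]
  gcongr
  exacts [(le_max_left _ _).trans (hexp b), hexp C]

end HartogsLemma

section SequencesOfAnalyticFunctions

lemma exists_eventually_forall_le_of_forall_mem_exists_le {X ι : Type*} [TopologicalSpace X]
    [BaireSpace X] {V : Set X} (hV : IsOpen V) (hVne : V.Nonempty) {u : ι → X → ℝ}
    (hu : ∀ i, ContinuousOn (u i) V) (huV : ∀ x ∈ V, ∃ K, ∀ i, u i x ≤ K) :
    ∃ x ∈ V, ∃ K : ℕ, ∀ᶠ y in 𝓝 x, ∀ i, u i y ≤ K := by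
  have := hV.baireSpace
  have := hVne.to_subtype
  have hclosed (k : ℕ) : IsClosed {x : V | ∀ i, u i x ≤ k} := by
    simp only [ofPred_forall]
    exact isClosed_iInter fun i => isClosed_le (hu i).domRestrict continuous_const
  have hcover : ⋃ k : ℕ, {x : V | ∀ i, u i x ≤ k} = univ := eq_univ_of_forall fun x =>
    have ⟨K, hK⟩ := huV x x.2
    have ⟨k, hk⟩ := exists_nat_ge K
    mem_iUnion.2 ⟨k, fun i => (hK i).trans hk⟩
  obtain ⟨k, x, hx⟩ := nonempty_interior_of_iUnion_of_closed hclosed hcover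
  refine ⟨x, x.2, k, ?_⟩
  have := mem_interior_iff_mem_nhds.1 hx
  rw [← map_nhds_subtype_coe_eq_nhds x.2 (hV.mem_nhds x.2)]
  exact this

variable {E G : Type*} [NormedAddCommGroup E] [NormedAddCommGroup G] {h : ℕ → E → G} {U D : Set E}
  {x₀ : E}

/-- Local geometric growth of a sequence of functions `h n`, uniformly in `n`: the radius of
convergence of the power series with coefficients `h n x` is locally bounded below in `x ∈ U`. -/
def LocallyGeometricallyBoundedOn (h : ℕ → E → G) (U : Set E) : Prop :=
  ∀ x ∈ U, ∃ M C : ℝ, 0 ≤ C ∧ ∀ᶠ y in 𝓝 x, ∀ n, ‖h n y‖ ≤ M * C ^ n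

lemma LocallyGeometricallyBoundedOn.exists_ball (hM : LocallyGeometricallyBoundedOn h U)
    (hU : IsOpen U) (hx₀ : x₀ ∈ U) :
    ∃ r > 0, ball x₀ r ⊆ U ∧
      ∃ M C : ℝ, 0 ≤ C ∧ ∀ x ∈ ball x₀ r, ∀ n, ‖h n x‖ ≤ M * C ^ n := by
  obtain ⟨M, C, hC, hMC⟩ := hM x₀ hx₀
  obtain ⟨r, hr, hball⟩ := Metric.eventually_nhds_iff_ball.1 (hMC.and (hU.mem_nhds hx₀))
  exact ⟨r, hr, fun x hx => (hball x hx).2, M, C, hC, fun x hx => (hball x hx).1⟩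

variable [NormedSpace ℂ E] [NormedSpace ℂ G]

lemma exists_forall_norm_add_smul_mul_pow_le {x y : E} {r M C : ℝ}
    (hh : ∀ n, AnalyticOnNhd ℂ (h n) (ball x₀ r)) (hC : 0 ≤ C)
    (hM : ∀ z ∈ ball x₀ r, ∀ n, ‖h n z‖ ≤ M * C ^ n) (hxy : ‖x - x₀‖ + 3 * ‖y‖ < r)
    (hD : IsOpen D) (hDdecay : ∀ z ∈ D, HasSuperexponentialDecay fun n => h n z)
    {t₀ : ℂ} (ht₀ : ‖t₀‖ < 1) (ht₀D : x + t₀ • y ∈ D) {R : ℝ} (hR : 0 < R) :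
    ∃ K, ∀ t : ℂ, ‖t‖ ≤ 1 → ∀ n, ‖h n (x + t • y)‖ * R ^ n ≤ K := by
  have hline : MapsTo (fun t : ℂ => x + t • y) (ball 0 3) (ball x₀ r) := fun t ht => by
    rw [mem_ball_zero_iff] at ht
    rw [mem_ball_iff_norm, add_sub_right_comm]
    refine (norm_add_le _ _).trans_lt (lt_of_le_of_lt ?_ hxy)
    rw [norm_smul]
    gcongr
  have hS : IsOpen (ball 0 1 ∩ (fun t : ℂ => x + t • y) ⁻¹' D) :=
    isOpen_ball.inter (hD.preimage (by fun_prop))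
  have hSne : volume (ball 0 1 ∩ (fun t : ℂ => x + t • y) ⁻¹' D) ≠ 0 :=
    (hS.measure_pos volume ⟨t₀, mem_ball_zero_iff.2 ht₀, ht₀D⟩).ne'
  obtain ⟨K, hK⟩ := exists_forall_norm_mul_pow_le_of_measure_ne_zero
    (h := fun n t => h n (x + t • y)) (A := closedBall 0 1) two_pos
    (fun n => (hh n).comp (fun _ _ => by fun_prop) hline) hC
    (fun n t ht => hM _ (hline ht) n)
    (fun t ht => ball_subset_ball' (by linarith [mem_closedBall.1 ht]))
    (fun t ht => inter_subset_left.trans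
      (ball_subset_ball' (by linarith [mem_closedBall'.1 ht]))) hSne (fun t ht => hDdecay _ ht.2) hR
  exact ⟨K, fun t ht => hK t (mem_closedBall_zero_iff.2 ht)⟩

lemma eventually_hasSuperexponentialDecay_of_mem_closure (hU : IsOpen U)
    (hh : ∀ n, AnalyticOnNhd ℂ (h n) U) (hM : LocallyGeometricallyBoundedOn h U) (hx₀ : x₀ ∈ U)
    (hD : IsOpen D) (hDdecay : ∀ x ∈ D, HasSuperexponentialDecay fun n => h n x)
    (hx₀D : x₀ ∈ closure D) : ∀ᶠ x in 𝓝 x₀, HasSuperexponentialDecay fun n => h n x := by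
  obtain ⟨r, hr, hrU, M, C, hC, hMC⟩ := hM.exists_ball hU hx₀
  obtain ⟨x', hx'D, hx'⟩ := Metric.mem_closure_iff.1 hx₀D (r / 20) (by positivity)
  filter_upwards [ball_mem_nhds x₀ (show 0 < r / 20 by positivity)] with x hx R hR
  rw [mem_ball] at hx
  have hx'x : ‖x' - x‖ ≤ r / 10 := by
    rw [← dist_eq_norm]; linarith [dist_triangle x' x₀ x, dist_comm x' x₀, dist_comm x₀ x]
  obtain ⟨K, hK⟩ := exists_forall_norm_add_smul_mul_pow_le (y := (2 : ℂ) • (x' - x)) (t₀ := 1 / 2)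
    (fun n => (hh n).mono hrU) hC hMC (by
      rw [norm_smul, Complex.norm_ofNat, ← dist_eq_norm]; linarith) hD hDdecay (by norm_num)
    (by simpa [smul_smul] using hx'D) hR
  exact ⟨K, fun n => by simpa using hK 0 (by simp) n⟩

lemma hasSuperexponentialDecay_of_isPreconnected (hU : IsOpen U) (hUc : IsPreconnected U)
    (hh : ∀ n, AnalyticOnNhd ℂ (h n) U) (hM : LocallyGeometricallyBoundedOn h U)
    (hD : IsOpen D) (hUD : (U ∩ D).Nonempty)
    (hDdecay : ∀ x ∈ D, HasSuperexponentialDecay fun n => h n x) :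
    ∀ x ∈ U, HasSuperexponentialDecay fun n => h n x := by
  set W := interior {x | HasSuperexponentialDecay fun n => h n x}
  have hUW : U ⊆ W := by
    refine hUc.subset_of_closure_inter_subset isOpen_interior
      (hUD.mono (inter_subset_inter_right _ (interior_maximal hDdecay hD))) fun x hx => ?_
    exact mem_interior_iff_mem_nhds.2 <| eventually_hasSuperexponentialDecay_of_mem_closure hU hh
      hM hx.2 isOpen_interior (fun _ hy => interior_subset hy) hx.1
  exact fun x hx => interior_subset (hUW hx)

lemma norm_le_of_forall_norm_eq_one_norm_add_smul_le {h : E → G} {x y : E} {C : ℝ}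
    (hh : AnalyticOnNhd ℂ h (closedBall x ‖y‖)) (hC : ∀ t : ℂ, ‖t‖ = 1 → ‖h (x + t • y)‖ ≤ C) :
    ‖h x‖ ≤ C := by
  have hline : MapsTo (fun t : ℂ => x + t • y) (closedBall 0 1) (closedBall x ‖y‖) := fun t ht => by
    rw [mem_closedBall_iff_norm, add_sub_cancel_left, norm_smul]
    exact mul_le_of_le_one_left (norm_nonneg y) (mem_closedBall_zero_iff.1 ht)
  have hdiff : DiffContOnCl ℂ (fun t : ℂ => h (x + t • y)) (ball 0 1) := by
    refine (hh.differentiableOn.comp (by fun_prop) hline).diffContOnCl_ball subset_rfl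
  simpa using Complex.norm_le_of_forall_mem_frontier_norm_le isBounded_ball hdiff
    (fun t ht => hC t (by simpa [frontier_ball] using ht))
    (subset_closure (mem_ball_self (x := (0 : ℂ)) one_pos))

lemma exists_eventually_forall_norm_add_smul_mul_pow_le [CompleteSpace E] {r M C : ℝ} (hr : 0 < r)
    (hh : ∀ n, AnalyticOnNhd ℂ (h n) (ball x₀ r)) (hC : 0 ≤ C)
    (hM : ∀ x ∈ ball x₀ r, ∀ n, ‖h n x‖ ≤ M * C ^ n)
    (hdecay : ∀ x ∈ ball x₀ r, HasSuperexponentialDecay fun n => h n x) {R : ℝ} (hR : 0 < R) :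
    ∃ y₀ ∈ ball (0 : E) (r / 3), ∃ K : ℝ, ∀ᶠ y in 𝓝 y₀, ∀ t : ℂ, ‖t‖ ≤ 1 →
      ∀ n, ‖h n (x₀ + t • y)‖ * R ^ n ≤ K := by
  have hdisc (t : closedBall (0 : ℂ) 1) :
      MapsTo (fun y => x₀ + (t : ℂ) • y) (ball 0 (r / 3)) (ball x₀ r) := fun y hy => by
    rw [mem_ball_zero_iff] at hy
    rw [mem_ball_iff_norm, add_sub_cancel_left, norm_smul]
    nlinarith [norm_nonneg y, mem_closedBall_zero_iff.1 t.2]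
  obtain ⟨y₀, hy₀, K, hK⟩ := exists_eventually_forall_le_of_forall_mem_exists_le
    (u := fun (p : ℕ × closedBall (0 : ℂ) 1) (y : E) => ‖h p.1 (x₀ + (p.2 : ℂ) • y)‖ * R ^ p.1)
    isOpen_ball ⟨0, mem_ball_self (show 0 < r / 3 by positivity)⟩
    (fun p => ((hh p.1).continuousOn.comp (by fun_prop) (hdisc p.2)).norm.mul continuousOn_const)
    fun y hy => by
      rw [mem_ball_zero_iff] at hy
      obtain ⟨K, hK⟩ := exists_forall_norm_add_smul_mul_pow_le (x := x₀) (y := y) (t₀ := 0) hh hC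
        hM (by rw [sub_self, norm_zero]; linarith) isOpen_ball hdecay (by simp)
        (by simpa using hr) hR
      exact ⟨K, fun p => hK p.2 (mem_closedBall_zero_iff.1 p.2.2) p.1⟩
  exact ⟨y₀, hy₀, K, hK.mono fun y hy t ht n => hy (n, ⟨t, mem_closedBall_zero_iff.2 ht⟩)⟩

lemma exists_eventually_forall_norm_mul_pow_le [CompleteSpace E] (hU : IsOpen U)
    (hh : ∀ n, AnalyticOnNhd ℂ (h n) U) (hM : LocallyGeometricallyBoundedOn h U)
    (hdecay : ∀ x ∈ U, HasSuperexponentialDecay fun n => h n x) (hx₀ : x₀ ∈ U)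
    {R : ℝ} (hR : 0 < R) : ∃ K : ℝ, ∀ᶠ x in 𝓝 x₀, ∀ n, ‖h n x‖ * R ^ n ≤ K := by
  obtain ⟨r, hr, hrU, M, C, hC, hMC⟩ := hM.exists_ball hU hx₀
  obtain ⟨y₀, hy₀, K, hK⟩ := exists_eventually_forall_norm_add_smul_mul_pow_le hr
    (fun n => (hh n).mono hrU) hC hMC (fun x hx => hdecay x (hrU hx)) hR
  obtain ⟨ρ, hρ, hρK⟩ := Metric.eventually_nhds_iff_ball.1 hK
  refine ⟨K, ?_⟩
  filter_upwards [ball_mem_nhds x₀ hρ, ball_mem_nhds x₀ (half_pos hr)] with x hxρ hxr n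
  rw [mem_ball_iff_norm] at hxρ
  rw [mem_ball_zero_iff] at hy₀
  rw [← le_div_iff₀ (by positivity)]
  refine norm_le_of_forall_norm_eq_one_norm_add_smul_le (y := y₀) ((hh n).mono ?_) fun t ht => ?_
  · exact (closedBall_subset_ball' (by linarith [mem_ball.1 hxr])).trans hrU
  · -- the circle of radius `‖y₀‖` around `x` is reached from `x₀` along directions close to `y₀`
    have ht0 : t ≠ 0 := norm_ne_zero_iff.1 (ht ▸ one_ne_zero)
    have hshift : x + t • y₀ = x₀ + t • (y₀ + t⁻¹ • (x - x₀)) := by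
      rw [smul_add, smul_inv_smul₀ ht0]; abel
    rw [le_div_iff₀ (by positivity), hshift]
    exact hρK _ (by simpa [norm_smul, ht] using hxρ) t ht.le n

lemma analyticOnNhd_tsum_of_hasSuperexponentialDecay [CompleteSpace E] [CompleteSpace G]
    (hU : IsOpen U) (hUc : IsPreconnected U) (hh : ∀ n, AnalyticOnNhd ℂ (h n) U)
    (hM : LocallyGeometricallyBoundedOn h U) (hD : IsOpen D) (hUD : (U ∩ D).Nonempty)
    (hDdecay : ∀ x ∈ D, HasSuperexponentialDecay fun n => h n x) :
    AnalyticOnNhd ℂ (fun x => ∑' n, h n x) U := fun x₀ hx₀ => by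
  obtain ⟨K, hK⟩ := exists_eventually_forall_norm_mul_pow_le hU hh hM
    (hasSuperexponentialDecay_of_isPreconnected hU hUc hh hM hD hUD hDdecay) hx₀ two_pos
  obtain ⟨V, hV, hVo, hx₀V⟩ := _root_.eventually_nhds_iff.1 (hK.and (hU.mem_nhds hx₀))
  refine analyticOnNhd_tsum_of_summable_norm (summable_geometric_two.mul_left K) hVo
    (fun n => (hh n).mono fun x hx => (hV x hx).2) (fun n x hx => ?_) x₀ hx₀V
  rw [one_div, inv_pow, ← div_eq_mul_inv, le_div_iff₀ (by positivity)]
  exact (hV x hx).1 n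

end SequencesOfAnalyticFunctions

section HartogsSeries

variable {E F G : Type*} [NormedAddCommGroup E] [NormedSpace ℂ E] [NormedAddCommGroup F]
  [NormedSpace ℂ F] [NormedAddCommGroup G] [NormedSpace ℂ G] {f : E × F → G} {U : Set E}
  {V : Set F} {c : F}

/-- The terms of the Hartogs series of `f` along `F` centered at `c`: at `(z, w)` the `n`-th one is
the degree `n` term in `w - c` of the Taylor expansion of `f (z, ·)` at `c`. -/
noncomputable def hartogsSeriesTerm (f : E × F → G) (c : F) (n : ℕ) (p : E × F) : G :=
  taylorPowerSeries f (p.1, c) n fun _ => (0, p.2 - c)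

lemma analyticOnNhd_hartogsSeriesTerm (hU : IsOpen U) (hV : IsOpen V)
    (hf : AnalyticOnNhd ℂ f (U ×ˢ V)) (hc : c ∈ V) (n : ℕ) :
    AnalyticOnNhd ℂ (hartogsSeriesTerm f c n) (U ×ˢ univ) := fun p hp => by
  have hcoeff : AnalyticAt ℂ (fun p : E × F => taylorPowerSeries f (p.1, c) n) p :=
    ((hf.iteratedFDeriv_of_isOpen (hU.prod hV) n (p.1, c) ⟨hp.1, hc⟩).const_smul
      (c := (n ! : ℂ)⁻¹)).comp₂ analyticAt_fst analyticAt_const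
  have hvec : AnalyticAt ℂ (fun p : E × F => fun _ : Fin n => ((0, p.2 - c) : E × F)) p :=
    .pi fun _ => analyticAt_const.prod (analyticAt_snd.sub analyticAt_const)
  exact (ContinuousLinearMap.id ℂ _).analyticAt_uncurry_of_multilinear.comp₂ hcoeff hvec

lemma locallyGeometricallyBoundedOn_hartogsSeriesTerm (hU : IsOpen U) (hV : IsOpen V)
    (hf : AnalyticOnNhd ℂ f (U ×ˢ V)) (hc : c ∈ V) :
    LocallyGeometricallyBoundedOn (hartogsSeriesTerm f c) (U ×ˢ univ) := fun ⟨z₀, w₀⟩ hp₀ => by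
  have hfc : ∀ᶠ p in 𝓝 (z₀, c), ‖f p‖ < ‖f (z₀, c)‖ + 1 ∧ p ∈ U ×ˢ V :=
    ((hf (z₀, c) ⟨hp₀.1, hc⟩).continuousAt.norm.eventually_lt_const (lt_add_one _)).and
      ((hU.prod hV).mem_nhds ⟨hp₀.1, hc⟩)
  obtain ⟨r, hr, hball⟩ := Metric.eventually_nhds_iff_ball.1 hfc
  set M := ‖f (z₀, c)‖ + 1
  refine ⟨Real.exp 1 * M, 2 * Real.exp 1 / (r / 2) * (‖w₀ - c‖ + 1), by positivity, ?_⟩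
  filter_upwards [prod_mem_nhds (ball_mem_nhds z₀ (half_pos hr)) (ball_mem_nhds w₀ one_pos)]
    with p ⟨hz, hw⟩ n
  have hsub : ball (p.1, c) (r / 2) ⊆ ball (z₀, c) r :=
    ball_subset_ball' (by rw [dist_prod_same_right]; linarith [mem_ball.1 hz])
  have hwc : ‖p.2 - c‖ ≤ ‖w₀ - c‖ + 1 := by
    rw [mem_ball_iff_norm] at hw
    linarith [norm_sub_le_norm_sub_add_norm_sub p.2 w₀ c]
  calc ‖hartogsSeriesTerm f c n p‖ ≤ ‖taylorPowerSeries f (p.1, c) n‖ * ‖p.2 - c‖ ^ n := by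
        simpa [hartogsSeriesTerm] using
          (taylorPowerSeries f (p.1, c) n).le_opNorm fun _ => (0, p.2 - c)
    _ ≤ Real.exp 1 * M * (2 * Real.exp 1 / (r / 2)) ^ n * (‖w₀ - c‖ + 1) ^ n := by
        gcongr
        exact norm_taylorPowerSeries_le (half_pos hr)
          (hf.mono fun q hq => (hball q (hsub hq)).2) (fun q hq => (hball q (hsub hq)).1.le) n
    _ = Real.exp 1 * M * (2 * Real.exp 1 / (r / 2) * (‖w₀ - c‖ + 1)) ^ n := by
        rw [mul_pow, mul_assoc]

variable [CompleteSpace G]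

lemma hartogsSeriesTerm_eq_taylorPowerSeries {z : E} (hf : AnalyticAt ℂ f (z, c)) {g : F → G}
    (hg : AnalyticAt ℂ g c) (hgf : g =ᶠ[𝓝 c] fun w => f (z, w)) (n : ℕ) (w : F) :
    hartogsSeriesTerm f c n (z, w) = taylorPowerSeries g c n fun _ => w - c := by
  have hshift : (fun v => f ((z, c) + ContinuousLinearMap.inr ℂ E F v)) =ᶠ[𝓝 0]
      fun v => g (c + ContinuousLinearMap.id ℂ F v) := by
    have htranslate : Tendsto (fun v : F => c + v) (𝓝 0) (𝓝 c) :=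
      Continuous.tendsto' (by fun_prop) _ _ (add_zero c)
    filter_upwards [htranslate.eventually hgf] with v hv
    simpa using hv.symm
  have h₁ := taylorPowerSeries_comp_add_apply hf (ContinuousLinearMap.inr ℂ E F) n (w - c)
  have h₂ := taylorPowerSeries_comp_add_apply hg (ContinuousLinearMap.id ℂ F) n (w - c)
  rw [taylorPowerSeries, (hshift.iteratedFDeriv ℂ n).eq_of_nhds] at h₁
  exact h₁.symm.trans h₂

lemma hasSuperexponentialDecay_hartogsSeriesTerm {z : E} (hf : AnalyticAt ℂ f (z, c)) {g : F → G}
    (hg : AnalyticOnNhd ℂ g univ) (hgf : g =ᶠ[𝓝 c] fun w => f (z, w)) (w : F) :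
    HasSuperexponentialDecay fun n => hartogsSeriesTerm f c n (z, w) := fun R hR => by
  have hsum := hasSum_taylorPowerSeries (y := (R : ℂ) • (w - c)) (hg.mono (subset_univ _))
    (lt_add_one _) (x := c)
  obtain ⟨K, hK⟩ := hsum.summable.tendsto_atTop_zero.norm.bddAbove_range
  refine ⟨K, fun n => (le_of_eq ?_).trans (hK (mem_range_self n))⟩
  have hsmul := (taylorPowerSeries g c n).map_smul_univ (fun _ => (R : ℂ)) fun _ => w - c
  simp only [hartogsSeriesTerm_eq_taylorPowerSeries hf (hg c trivial) hgf, hsmul]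
  simp [norm_smul, abs_of_pos hR, mul_comm]

lemma tsum_hartogsSeriesTerm_eventuallyEq {z : E} (hf : AnalyticAt ℂ f (z, c)) :
    ∀ᶠ w in 𝓝 c, ∑' n, hartogsSeriesTerm f c n (z, w) = f (z, w) := by
  obtain ⟨r, hr, hball⟩ := Metric.eventually_nhds_iff_ball.1 hf.eventually_analyticAt
  filter_upwards [ball_mem_nhds c hr] with w hw
  have := hasSum_taylorPowerSeries (y := (0, w - c)) (x := (z, c)) hball (by
    simpa [← dist_eq_norm] using hw)
  simpa [hartogsSeriesTerm] using this.tsum_eq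

variable [CompleteSpace E] [CompleteSpace F]

theorem hartogs_siciak_lp_infty_general (hU : IsOpen U) (hUc : IsPreconnected U) (hV : IsOpen V)
    (hVc : IsPreconnected V) (hVne : V.Nonempty) (hf : AnalyticOnNhd ℂ f (U ×ˢ V)) {D : Set E}
    (hD : IsOpen D) (hDne : D.Nonempty) (hDU : D ⊆ U)
    (hext : ∀ z ∈ D, ∃ g : F → G, AnalyticOnNhd ℂ g univ ∧ ∀ w ∈ V, g w = f (z, w)) :
    ∃ Φ : E × F → G, AnalyticOnNhd ℂ Φ (U ×ˢ univ) ∧ ∀ z ∈ U, ∀ w ∈ V, Φ (z, w) = f (z, w) := by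
  obtain ⟨c, hc⟩ := hVne
  obtain ⟨z₁, hz₁⟩ := hDne
  have hsum : AnalyticOnNhd ℂ (fun p => ∑' n, hartogsSeriesTerm f c n p) (U ×ˢ univ) := by
    refine analyticOnNhd_tsum_of_hasSuperexponentialDecay (hU.prod isOpen_univ)
      (hUc.prod isPreconnected_univ) (analyticOnNhd_hartogsSeriesTerm hU hV hf hc)
      (locallyGeometricallyBoundedOn_hartogsSeriesTerm hU hV hf hc) (hD.prod isOpen_univ)
      ⟨(z₁, c), ⟨hDU hz₁, trivial⟩, hz₁, trivial⟩ fun ⟨z, w⟩ ⟨hz, _⟩ => ?_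
    obtain ⟨g, hg, hgf⟩ := hext z hz
    exact hasSuperexponentialDecay_hartogsSeriesTerm (hf (z, c) ⟨hDU hz, hc⟩) hg
      (eventually_of_mem (hV.mem_nhds hc) hgf) w
  refine ⟨_, hsum, fun z hz => ?_⟩
  have hslice : AnalyticOnNhd ℂ (fun w => (z, w)) V :=
    fun w _ => analyticAt_const.prod analyticAt_id
  exact (hsum.comp hslice fun w _ => ⟨hz, trivial⟩).eqOn_of_preconnected_of_eventuallyEq
    (hf.comp hslice fun w hw => ⟨hz, hw⟩) hVc hc
    (tsum_hartogsSeriesTerm_eventuallyEq (hf _ ⟨hz, hc⟩))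

end HartogsSeries

/-- Hartogs–Siciak extension in `ℓ∞`: if `f` is analytic on `B(0,1) × B(0,1)` in
`ℓ∞ × ℓ∞` and all slices `f(z, ·)` for `z` in some sub-ball `B(z1, β1) ⊆ B(0,1)` extend
to functions analytic on all of `ℓ∞`, then `f` extends analytically to `B(0,1) × ℓ∞`. -/
theorem hartogs_siciak_lp_infty
    (f : lp (fun _ : ℕ => ℂ) ∞ × lp (fun _ : ℕ => ℂ) ∞ → ℂ)
    (hf : AnalyticOnNhd ℂ f
      (Metric.ball (0 : lp (fun _ : ℕ => ℂ) ∞) 1 ×ˢ Metric.ball (0 : lp (fun _ : ℕ => ℂ) ∞) 1))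
    (z1 : lp (fun _ : ℕ => ℂ) ∞) (β1 : ℝ) (hβ1 : 0 < β1)
    (hsub : Metric.ball z1 β1 ⊆ Metric.ball (0 : lp (fun _ : ℕ => ℂ) ∞) 1)
    (hext : ∀ z ∈ Metric.ball z1 β1,
      ∃ g : lp (fun _ : ℕ => ℂ) ∞ → ℂ, AnalyticOnNhd ℂ g Set.univ ∧
        ∀ w ∈ Metric.ball (0 : lp (fun _ : ℕ => ℂ) ∞) 1, g w = f (z, w)) :
    ∃ F : lp (fun _ : ℕ => ℂ) ∞ × lp (fun _ : ℕ => ℂ) ∞ → ℂ,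
      AnalyticOnNhd ℂ F
        (Metric.ball (0 : lp (fun _ : ℕ => ℂ) ∞) 1 ×ˢ (Set.univ : Set (lp (fun _ : ℕ => ℂ) ∞))) ∧
      ∀ z ∈ Metric.ball (0 : lp (fun _ : ℕ => ℂ) ∞) 1,
        ∀ w ∈ Metric.ball (0 : lp (fun _ : ℕ => ℂ) ∞) 1, F (z, w) = f (z, w) := by
  exact hartogs_siciak_lp_infty_general isOpen_ball (convex_ball 0 1).isPreconnected isOpen_ball
    (convex_ball 0 1).isPreconnected ⟨0, mem_ball_self one_pos⟩ hf isOpen_ball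
    ⟨z1, mem_ball_self hβ1⟩ hsub hext
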